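/- Let p be an at most isolated singular point of D (as in the context). Then rk M'_f(p) = 0 if and only if p is a singular point of D (i.e. (∂g/∂y_i)(q) = 0 for all i) and D is not strongly Euler homogeneous at p. -/

import Mathlib

open MvPolynomial

noncomputable section

/-- The Jacobian syzygy module `K` of `f`, as a set:
tuples `a = (a_0, …, a_n)` of polynomials with `∑ a_i ∂f/∂x_i = 0`. -/
def syzSet (n : ℕ) (f : MvPolynomial (Fin (n + 1)) ℂ) :
    Set (Fin (n + 1) → MvPolynomial (Fin (n + 1)) ℂ) :=
  {a | ∑ i, a i * pderiv i f = 0}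

/-- The image of the syzygy module under coordinatewise evaluation at `p`. -/
def evSyz (n : ℕ) (f : MvPolynomial (Fin (n + 1)) ℂ) (p : Fin (n + 1) → ℂ) :
    Set (Fin (n + 1) → ℂ) :=
  (fun a => fun i => eval p (a i)) '' syzSet n f

/-- The syzygy rank `rk M'_f(p)`. -/
def syzRank (n : ℕ) (f : MvPolynomial (Fin (n + 1)) ℂ) (p : Fin (n + 1) → ℂ) : ℕ :=
  Module.finrank ℂ (Submodule.span ℂ (evSyz n f p))

/-- The augmented syzygy rank `rk M_f(p)`. -/
def augSyzRank (n : ℕ) (f : MvPolynomial (Fin (n + 1)) ℂ) (p : Fin (n + 1) → ℂ) : ℕ :=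
  Module.finrank ℂ (Submodule.span ℂ (evSyz n f p ∪ {p}))

/-- The dehomogenization `g(y_1,…,y_n) = f(1,y_1,…,y_n)`. -/
def dehom (n : ℕ) (f : MvPolynomial (Fin (n + 1)) ℂ) : MvPolynomial (Fin n) ℂ :=
  aeval (Fin.cons (1 : MvPolynomial (Fin n) ℂ) fun i => X i) f

/-- `D = V(f)` is strongly Euler homogeneous at `p` (with `p_0 = 1`): there exist an open
neighborhood `U` of `q = (p_1,…,p_n)` and analytic functions `a_i` on `U` vanishing at `q`
with `g = ∑ a_i ∂g/∂y_i` on `U`, where `g` is the dehomogenization of `f`. -/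
def StronglyEulerHomogeneousAt (n : ℕ) (f : MvPolynomial (Fin (n + 1)) ℂ)
    (p : Fin (n + 1) → ℂ) : Prop :=
  ∃ (U : Set (Fin n → ℂ)) (a : Fin n → (Fin n → ℂ) → ℂ),
    IsOpen U ∧ (fun i => p i.succ) ∈ U ∧
    (∀ i, ∀ y ∈ U, AnalyticAt ℂ (a i) y) ∧
    (∀ i, a i (fun j => p j.succ) = 0) ∧
    ∀ y ∈ U,
      eval y (dehom n f) = ∑ i, a i y * eval y (pderiv i (dehom n f))

/-- `p` is an at most isolated singular point of `D`: on some neighborhood of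
`q = (p_1,…,p_n)`, the only point where `g` and all its partial derivatives vanish is `q`. -/
def AtMostIsolatedSingAt (n : ℕ) (f : MvPolynomial (Fin (n + 1)) ℂ)
    (p : Fin (n + 1) → ℂ) : Prop :=
  ∃ U₀ : Set (Fin n → ℂ), IsOpen U₀ ∧ (fun i => p i.succ) ∈ U₀ ∧
    ∀ y ∈ U₀, (eval y (dehom n f) = 0 ∧ ∀ i, eval y (pderiv i (dehom n f)) = 0) →
      y = (fun i => p i.succ)

/-!
A syzygy `a` is a vector field `∑ a_i ∂/∂x_i` killing `f`. By Euler's identity it induces on the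
chart `x_0 = 1` a vector field `v` with `v g = -d a_0 g`. Such a `v` preserves the ideal generated
by `g` and its partial derivatives, so its flow preserves the singular locus of `g = 0`, and `v`
vanishes at an isolated singular point; that is, `a(p)` is a multiple of `p`. If this multiple
is nonzero, then `a_0(p) ≠ 0` and dividing `v g = -d a_0 g` by `-d a_0` shows that `D` is strongly
Euler homogeneous at `p`.

Conversely, the Koszul syzygies `(∂_i f) e_0 - (∂_0 f) e_i` force `p` to be singular when all
syzygies vanish at `p`. If `D` is strongly Euler homogeneous at `p`, then near `p` the polynomial
`f` is a combination of `∂_1 f, …, ∂_n f` with analytic coefficients. Truncating the coefficients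
and applying Krull's intersection theorem yields a polynomial identity `u f = ∑ c_i ∂_i f` with
`u(p) ≠ 0`. Subtracting `d` times this identity from `u` times Euler's identity gives a syzygy
whose `0`-th entry is `u x_0`.
-/

open Asymptotics Filter Set
open scoped Matrix Topology

theorem eval_smul_of_isHomogeneous {R σ : Type*} [CommSemiring R] {H : MvPolynomial σ R} {m : ℕ}
    (hH : H.IsHomogeneous m) (t : R) (z : σ → R) : eval (t • z) H = t ^ m * eval z H := by
  rw [eval_eq, eval_eq, Finset.mul_sum]
  refine Finset.sum_congr rfl fun s hs => ?_
  simp only [Pi.smul_apply, smul_eq_mul, mul_pow, Finset.prod_mul_distrib,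
    Finset.prod_pow_eq_pow_sum, hH.degree_eq_sum_deg_support hs]
  exact mul_left_comm _ _ _

theorem eval_aeval {R σ τ : Type*} [CommSemiring R] (y : τ → R) (g : σ → MvPolynomial τ R)
    (P : MvPolynomial σ R) : eval y (aeval g P) = eval (fun i => eval y (g i)) P := by
  simpa using comp_aeval_apply (aeval y) P (f := g)

theorem exists_one_sub_mul_mem_of_forall_mem_sup_pow {R : Type*} [CommRing R] [IsNoetherianRing R]
    {I J : Ideal R} {x : R} (hx : ∀ k, x ∈ J ⊔ I ^ k) : ∃ r ∈ I, (1 - r) * x ∈ J := by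
  -- Krull's intersection theorem for the `R`-module `R ⧸ J`
  have hmem : Ideal.Quotient.mk J x ∈ (⨅ k : ℕ, I ^ k • ⊤ : Submodule R (R ⧸ J)) := by
    refine (Submodule.mem_iInf _).2 fun k => ?_
    obtain ⟨y, hy, z, hz, rfl⟩ := Submodule.mem_sup.1 (hx k)
    rw [map_add, Ideal.Quotient.eq_zero_iff_mem.2 hy, zero_add, ← mul_one z]
    exact Submodule.smul_mem_smul hz (Submodule.mem_top (x := (1 : R ⧸ J)))
  obtain ⟨⟨r, hrI⟩, hr⟩ := (Ideal.mem_iInf_smul_pow_eq_bot_iff I _).1 hmem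
  refine ⟨r, hrI, Ideal.Quotient.eq_zero_iff_mem.1 ?_⟩
  rw [sub_mul, one_mul, map_sub, sub_eq_zero]
  exact hr.symm

section OrderOfVanishing

variable {𝕜 σ : Type*} [NontriviallyNormedField 𝕜] [Fintype σ]

theorem analyticAt_eval (P : MvPolynomial σ 𝕜) (p : σ → 𝕜) : AnalyticAt 𝕜 (fun y => eval y P) p :=
  AnalyticOnNhd.eval_continuousLinearMap (.id 𝕜 (σ → 𝕜)) P p trivial

theorem isBigO_eval_of_mem_ker_pow {p : σ → 𝕜} {k : ℕ} {H : MvPolynomial σ 𝕜}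
    (hH : H ∈ RingHom.ker (eval p) ^ k) :
    (fun y => eval y H) =O[𝓝 p] fun y => ‖y - p‖ ^ k := by
  induction k generalizing H with
  | zero => simpa using (analyticAt_eval H p).continuousAt.isBigO_one ℝ
  | succ k ih =>
    rw [pow_succ] at hH
    induction hH using Submodule.mul_induction_on' with
    | mem_mul_mem P hP Q hQ =>
      have hQO : (fun y => eval y Q) =O[𝓝 p] fun y => ‖y - p‖ := by
        simpa [RingHom.mem_ker.1 hQ] using
          (analyticAt_eval Q p).differentiableAt.hasFDerivAt.isBigO_sub.norm_right
      simpa only [map_mul, pow_succ] using (ih hP).mul hQO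
    | add P _ Q _ hP hQ => simpa only [map_add] using hP.add hQ

theorem eq_zero_of_isHomogeneous_of_isBigO {H : MvPolynomial σ 𝕜} {m : ℕ}
    (hH : H.IsHomogeneous m)
    (hO : (fun y => eval y H) =O[𝓝 0] fun y : σ → 𝕜 => ‖y‖ ^ (m + 1)) : H = 0 := by
  have : Infinite 𝕜 := NontriviallyNormedField.infinite 𝕜
  refine MvPolynomial.funext fun z => ?_
  have hline : Tendsto (fun t : 𝕜 => t • z) (𝓝[≠] 0) (𝓝 0) :=
    tendsto_nhdsWithin_of_tendsto_nhds (Continuous.tendsto' (by fun_prop) _ _ (zero_smul 𝕜 z))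
  have hzero : Tendsto (fun t : 𝕜 => ‖t‖ * ‖z‖ ^ (m + 1)) (𝓝[≠] 0) (𝓝 0) :=
    tendsto_nhdsWithin_of_tendsto_nhds (Continuous.tendsto' (by fun_prop) _ _ (by simp))
  have hconst : (fun _ : 𝕜 => eval z H) =O[𝓝[≠] 0] fun t => ‖t‖ * ‖z‖ ^ (m + 1) := by
    obtain ⟨K, hK⟩ := (hO.comp_tendsto hline).bound
    refine IsBigO.of_bound K ?_
    filter_upwards [hK, self_mem_nhdsWithin] with t ht ht0
    have htm : 0 < ‖t‖ ^ m := pow_pos (norm_pos_iff.2 ht0) m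
    refine le_of_mul_le_mul_left ?_ htm
    calc ‖t‖ ^ m * ‖eval z H‖ = ‖eval (t • z) H‖ := by
          rw [eval_smul_of_isHomogeneous hH, norm_mul, norm_pow]
      _ ≤ K * ‖‖t • z‖ ^ (m + 1)‖ := ht
      _ = ‖t‖ ^ m * (K * ‖‖t‖ * ‖z‖ ^ (m + 1)‖) := by
          simp only [norm_mul, norm_pow, norm_norm, norm_smul]; ring
  simpa using tendsto_nhds_unique tendsto_const_nhds (hconst.trans_tendsto hzero)

theorem mem_idealOfVars_pow_of_isBigO {k : ℕ} {H : MvPolynomial σ 𝕜}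
    (hO : (fun y => eval y H) =O[𝓝 0] fun y : σ → 𝕜 => ‖y‖ ^ k) : H ∈ idealOfVars σ 𝕜 ^ k := by
  induction k with
  | zero => simp
  | succ k ih =>
    have hmem : H ∈ idealOfVars σ 𝕜 ^ k :=
      ih (hO.trans (isLittleO_norm_pow_norm_pow k.lt_succ_self).isBigO)
    set Hk := homogeneousComponent k H with hHk
    have hrest : H - Hk ∈ idealOfVars σ 𝕜 ^ (k + 1) := by
      rw [mem_pow_idealOfVars_iff'] at hmem ⊢
      intro s hs
      rcases Nat.lt_succ_iff_lt_or_eq.1 hs with hlt | heq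
      · simp [hHk, coeff_homogeneousComponent, hlt.ne, hmem s hlt]
      · simp [hHk, coeff_homogeneousComponent, heq]
    have hle : idealOfVars σ 𝕜 ≤ RingHom.ker (eval (0 : σ → 𝕜)) :=
      Ideal.span_le.2 (range_subset_iff.2 fun i => by simp [RingHom.mem_ker])
    have hHkO : (fun y => eval y Hk) =O[𝓝 0] fun y : σ → 𝕜 => ‖y‖ ^ (k + 1) := by
      have := isBigO_eval_of_mem_ker_pow (Ideal.pow_right_mono hle _ hrest)
      refine (hO.sub (by simpa only [sub_zero] using this)).congr_left fun y => ?_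
      rw [map_sub, sub_sub_cancel]
    have hHk0 : Hk = 0 :=
      eq_zero_of_isHomogeneous_of_isBigO (homogeneousComponent_isHomogeneous k H) hHkO
    simpa [hHk0] using hrest

theorem mem_ker_eval_pow_iff_isBigO {p : σ → 𝕜} {k : ℕ} {H : MvPolynomial σ 𝕜} :
    H ∈ RingHom.ker (eval p) ^ k ↔ (fun y => eval y H) =O[𝓝 p] fun y => ‖y - p‖ ^ k := by
  refine ⟨isBigO_eval_of_mem_ker_pow, fun hO => ?_⟩
  let τ : MvPolynomial σ 𝕜 →ₐ[𝕜] MvPolynomial σ 𝕜 := aeval fun i => X i + C (p i)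
  let τ' : MvPolynomial σ 𝕜 →ₐ[𝕜] MvPolynomial σ 𝕜 := aeval fun i => X i - C (p i)
  have hτ (y : σ → 𝕜) : eval y (τ H) = eval (y + p) H := by
    simp only [τ, eval_aeval, map_add, eval_X, eval_C]; rfl
  have hτ' : τ' (τ H) = H := by
    have hcomp : τ'.comp τ = AlgHom.id 𝕜 _ := by ext i : 1; simp [τ, τ']
    exact DFunLike.congr_fun hcomp H
  have htranslate : Tendsto (fun y => y + p) (𝓝 0) (𝓝 p) :=
    Continuous.tendsto' (by fun_prop) _ _ (zero_add p)
  have hmem : τ H ∈ idealOfVars σ 𝕜 ^ k := by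
    refine mem_idealOfVars_pow_of_isBigO ?_
    simpa [Function.comp_def, hτ] using hO.comp_tendsto htranslate
  have hle : (idealOfVars σ 𝕜).map τ' ≤ RingHom.ker (eval p) := by
    rw [Ideal.map_span, Ideal.span_le]
    rintro _ ⟨_, ⟨i, rfl⟩, rfl⟩
    simp [τ', RingHom.mem_ker]
  rw [← hτ']
  refine Ideal.pow_right_mono hle k ?_
  rw [← Ideal.map_pow]
  exact Ideal.mem_map_of_mem τ' hmem

theorem exists_isBigO_sub_eval {b : (σ → 𝕜) → 𝕜} {p : σ → 𝕜} (hb : AnalyticAt 𝕜 b p) (k : ℕ) :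
    ∃ T : MvPolynomial σ 𝕜, (fun y => b y - eval y T) =O[𝓝 p] fun y => ‖y - p‖ ^ k := by
  classical
  obtain ⟨s, hs⟩ := hb
  -- the Taylor polynomial, each multilinear term being expanded in the standard basis
  refine ⟨∑ m ∈ Finset.range k, ∑ r : Fin m → σ,
    C (s m fun j => Pi.single (r j) 1) * ∏ j, (X (r j) - C (p (r j))), ?_⟩
  have htranslate : Tendsto (fun y => y - p) (𝓝 p) (𝓝 0) :=
    Continuous.tendsto' (by fun_prop) _ _ (sub_self p)
  refine ((hs.isBigO_sub_partialSum_pow k).comp_tendsto htranslate).congr_left fun y => ?_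
  simp only [Function.comp_apply, add_sub_cancel, FormalMultilinearSeries.partialSum, map_sum,
    map_mul, eval_C, map_prod, map_sub, eval_X]
  congr 1
  refine Finset.sum_congr rfl fun m _ => ?_
  conv_lhs => rw [pi_eq_sum_univ' (y - p), ContinuousMultilinearMap.map_sum]
  refine Finset.sum_congr rfl fun r _ => ?_
  rw [ContinuousMultilinearMap.map_smul_univ, smul_eq_mul, mul_comm]
  rfl

variable {ι : Type*} [Fintype ι] {G : MvPolynomial σ 𝕜} {F : ι → MvPolynomial σ 𝕜}
  {b : ι → (σ → 𝕜) → 𝕜} {p : σ → 𝕜}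

theorem mem_span_sup_ker_eval_pow (hb : ∀ i, AnalyticAt 𝕜 (b i) p)
    (h : ∀ᶠ y in 𝓝 p, eval y G = ∑ i, b i y * eval y (F i)) (k : ℕ) :
    G ∈ Ideal.span (range F) ⊔ RingHom.ker (eval p) ^ k := by
  choose T hT using fun i => exists_isBigO_sub_eval (hb i) k
  have hspan : ∑ i, T i * F i ∈ Ideal.span (range F) :=
    Ideal.mem_span_range_iff_exists_fun.2 ⟨T, rfl⟩
  have hrest : G - ∑ i, T i * F i ∈ RingHom.ker (eval p) ^ k := by
    refine mem_ker_eval_pow_iff_isBigO.2 ?_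
    have hO : (fun y => ∑ i, (b i y - eval y (T i)) * eval y (F i)) =O[𝓝 p]
        fun y => ‖y - p‖ ^ k :=
      IsBigO.fun_sum fun i _ => by
        simpa using (hT i).mul ((analyticAt_eval (F i) p).continuousAt.isBigO_one ℝ)
    refine hO.congr' ?_ EventuallyEq.rfl
    filter_upwards [h] with y hy
    simp [hy, sub_mul]
  exact Submodule.mem_sup.2 ⟨_, hspan, _, hrest, by ring⟩

theorem exists_mul_mem_span_of_eventually_eq_sum (hb : ∀ i, AnalyticAt 𝕜 (b i) p)
    (h : ∀ᶠ y in 𝓝 p, eval y G = ∑ i, b i y * eval y (F i)) :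
    ∃ u, eval p u ≠ 0 ∧ u * G ∈ Ideal.span (range F) := by
  obtain ⟨r, hr, hmem⟩ :=
    exists_one_sub_mul_mem_of_forall_mem_sup_pow (mem_span_sup_ker_eval_pow hb h)
  exact ⟨1 - r, by simp [RingHom.mem_ker.1 hr], hmem⟩

end OrderOfVanishing

section Flow

theorem eq_zero_of_hasDerivWithinAt_clm_apply {𝕜 E : Type*} [NontriviallyNormedField 𝕜]
    [NormedAddCommGroup E] [NormedSpace 𝕜 E] [NormedSpace ℝ E] {A : ℝ → E →L[𝕜] E} {w : ℝ → E}
    {a b : ℝ} (hA : ContinuousOn A (Icc a b))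
    (hw : ∀ t ∈ Icc a b, HasDerivWithinAt w (A t (w t)) (Icc a b) t) (ha : w a = 0) :
    ∀ t ∈ Icc a b, w t = 0 := by
  obtain ⟨K, hK⟩ := isCompact_Icc.exists_bound_of_continuousOn hA
  refine eq_zero_of_abs_deriv_le_mul_abs_self_of_eq_zero_right (K := K)
    (fun t ht => (hw t ht).continuousWithinAt) (f' := fun t => A t (w t)) (fun t ht => ?_) ha
    fun t ht => (A t).le_of_opNorm_le (hK t (Ico_subset_Icc_self ht)) (w t)
  exact (hw t (Ico_subset_Icc_self ht)).mono_of_mem_nhdsWithin (Icc_mem_nhdsGE_of_mem ht)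

theorem eq_zero_of_hasDerivWithinAt_mulVec {𝕜 ι : Type*} [RCLike 𝕜] [Fintype ι]
    {A : ℝ → Matrix ι ι 𝕜} {w : ℝ → ι → 𝕜} {a b : ℝ} (hA : ContinuousOn A (Icc a b))
    (hw : ∀ t ∈ Icc a b, HasDerivWithinAt w (A t *ᵥ w t) (Icc a b) t) (ha : w a = 0) :
    ∀ t ∈ Icc a b, w t = 0 := by
  classical
  let Φ : Matrix ι ι 𝕜 →ₗ[𝕜] (ι → 𝕜) →L[𝕜] (ι → 𝕜) :=
    LinearMap.toContinuousLinearMap.toLinearMap ∘ₗ Matrix.toLin'.toLinearMap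
  exact eq_zero_of_hasDerivWithinAt_clm_apply
    (Φ.continuous_of_finiteDimensional.comp_continuousOn hA) hw ha

variable {𝕜 σ : Type*}

/-- The polynomial vector field `∑ D(X i) ∂/∂y_i` on affine space attached to a derivation `D` of
the coordinate ring. -/
def derivationField [CommSemiring 𝕜] (D : Derivation 𝕜 (MvPolynomial σ 𝕜) (MvPolynomial σ 𝕜))
    (y : σ → 𝕜) (i : σ) : 𝕜 :=
  eval y (D (X i))

variable [RCLike 𝕜] [Fintype σ] {D : Derivation 𝕜 (MvPolynomial σ 𝕜) (MvPolynomial σ 𝕜)}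

theorem hasDerivWithinAt_eval_of_isIntegralCurveOn {γ : ℝ → σ → 𝕜} {s : Set ℝ}
    (hγ : IsIntegralCurveOn γ (fun _ => derivationField D) s) {t : ℝ} (ht : t ∈ s)
    (P : MvPolynomial σ 𝕜) :
    HasDerivWithinAt (fun u => eval (γ u) P) (eval (γ t) (D P)) s t := by
  induction P using MvPolynomial.induction_on with
  | C a => simpa using hasDerivWithinAt_const t s a
  | add P Q hP hQ => simpa only [map_add] using hP.fun_add hQ
  | mul_X P i hP =>
    have hi : HasDerivWithinAt (fun u => γ u i) (eval (γ t) (D (X i))) s t :=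
      hasDerivWithinAt_pi.1 (hγ t ht) i
    simp only [map_mul, eval_X, Derivation.leibniz, smul_eq_mul, map_add]
    exact (hP.fun_mul hi).congr_deriv (by ring)

theorem mem_zeroLocus_of_isIntegralCurveOn {I : Ideal (MvPolynomial σ 𝕜)}
    (hI : ∀ P ∈ I, D P ∈ I) {γ : ℝ → σ → 𝕜} {a b : ℝ}
    (hγ : IsIntegralCurveOn γ (fun _ => derivationField D) (Icc a b))
    (ha : γ a ∈ zeroLocus 𝕜 I) : ∀ t ∈ Icc a b, γ t ∈ zeroLocus 𝕜 I := by
  obtain ⟨N, F, rfl⟩ := Submodule.fg_iff_exists_fin_generating_family.1 (IsNoetherian.noetherian I)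
  have hmem (j : Fin N) : F j ∈ Ideal.span (range F) := Ideal.subset_span (mem_range_self j)
  choose A hA using fun j => Ideal.mem_span_range_iff_exists_fun.1 (hI (F j) (hmem j))
  have hcurve (P : MvPolynomial σ 𝕜) : ContinuousOn (fun t => eval (γ t) P) (Icc a b) :=
    (continuous_eval P).comp_continuousOn hγ.continuousOn
  have hF : ∀ t ∈ Icc a b, (fun j => eval (γ t) (F j)) = 0 := by
    refine eq_zero_of_hasDerivWithinAt_mulVec (A := fun t j i => eval (γ t) (A j i))
      (continuousOn_pi.2 fun j => continuousOn_pi.2 fun i => hcurve (A j i))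
      (fun t ht => hasDerivWithinAt_pi.2 fun j => ?_) (funext fun j => ha (F j) (hmem j))
    refine (hasDerivWithinAt_eval_of_isIntegralCurveOn hγ ht (F j)).congr_deriv ?_
    simp [← hA, Matrix.mulVec, dotProduct]
  intro t ht
  rw [Ideal.submodule_span_eq, zeroLocus_span]
  rintro _ ⟨j, rfl⟩
  exact congrFun (hF t ht) j

theorem exists_isIntegralCurveOn_derivationField
    (D : Derivation 𝕜 (MvPolynomial σ 𝕜) (MvPolynomial σ 𝕜)) (q : σ → 𝕜) :
    ∃ γ : ℝ → σ → 𝕜, γ 0 = q ∧ ∃ ε > 0,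
      IsIntegralCurveOn γ (fun _ => derivationField D) (Icc 0 ε) := by
  have hsmooth : ContDiffAt ℝ 1 (derivationField D) q :=
    contDiffAt_pi.2 fun i =>
      (AnalyticAt.contDiffAt (analyticAt_eval (D (X i)) q)).restrict_scalars ℝ
  obtain ⟨γ, hγ0, ε, hε, hγ⟩ :=
    hsmooth.exists_forall_mem_closedBall_exists_eq_forall_mem_Ioo_hasDerivAt₀ 0
  refine ⟨γ, hγ0, ε / 2, half_pos hε, fun t ht => (hγ t ⟨?_, ?_⟩).hasDerivWithinAt⟩
  · linarith [ht.1]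
  · linarith [ht.2]

end Flow

theorem derivationField_eq_zero_of_isolated {𝕜 σ : Type*} [RCLike 𝕜] [Finite σ]
    {D : Derivation 𝕜 (MvPolynomial σ 𝕜) (MvPolynomial σ 𝕜)} {I : Ideal (MvPolynomial σ 𝕜)}
    (hI : ∀ P ∈ I, D P ∈ I) {q : σ → 𝕜} (hq : q ∈ zeroLocus 𝕜 I)
    (hiso : ∀ᶠ y in 𝓝 q, y ∈ zeroLocus 𝕜 I → y = q) : derivationField D q = 0 := by
  cases nonempty_fintype σ
  obtain ⟨γ, rfl, ε, hε, hγ⟩ := exists_isIntegralCurveOn_derivationField D q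
  have h0 : (0 : ℝ) ∈ Icc 0 ε := left_mem_Icc.2 hε.le
  have hconst : γ =ᶠ[𝓝[Icc 0 ε] 0] fun _ => γ 0 := by
    filter_upwards [(hγ.continuousWithinAt h0).eventually hiso, self_mem_nhdsWithin] with t hiso ht
    exact hiso (mem_zeroLocus_of_isIntegralCurveOn hI hγ hq t ht)
  have hderiv : HasDerivWithinAt γ 0 (Icc 0 ε) 0 :=
    (hasDerivWithinAt_const 0 _ (γ 0)).congr_of_eventuallyEq hconst rfl
  exact (uniqueDiffOn_Icc hε 0 h0).eq_deriv _ (hγ 0 h0) hderiv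

section Tjurina

variable {R σ : Type*}

/-- The Tjurina ideal of `g`, generated by `g` and its partial derivatives; its zero locus is the
singular locus of the hypersurface `g = 0`. -/
def tjurinaIdeal [CommSemiring R] (g : MvPolynomial σ R) : Ideal (MvPolynomial σ R) :=
  Ideal.span (insert g (range fun i => pderiv i g))

theorem mem_zeroLocus_tjurinaIdeal_iff {K : Type*} [Field K] {g : MvPolynomial σ K} {y : σ → K} :
    y ∈ zeroLocus K (tjurinaIdeal g) ↔ eval y g = 0 ∧ ∀ i, eval y (pderiv i g) = 0 := by
  simp [tjurinaIdeal, zeroLocus_span]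

theorem derivation_apply_eq_sum_pderiv [CommSemiring R] [Fintype σ]
    (D : Derivation R (MvPolynomial σ R) (MvPolynomial σ R)) (P : MvPolynomial σ R) :
    D P = ∑ i, D (X i) * pderiv i P := by
  classical
  have hsum (Q : MvPolynomial σ R) :
      (∑ i, D (X i) • pderiv i : Derivation R (MvPolynomial σ R) (MvPolynomial σ R)) Q =
        ∑ i, D (X i) * pderiv i Q := by
    rw [← Derivation.coeFnAddMonoidHom_apply, map_sum, Finset.sum_apply]
    rfl
  rw [← hsum]
  refine DFunLike.congr_fun (derivation_ext fun j => ?_) P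
  rw [hsum]
  simp [pderiv_X, Pi.single_apply]

theorem derivation_apply_mem_span {A : Type*} [CommSemiring R] [CommSemiring A] [Algebra R A]
    {D : Derivation R A A} {S : Set A} (hS : ∀ x ∈ S, D x ∈ Ideal.span S) {x : A}
    (hx : x ∈ Ideal.span S) : D x ∈ Ideal.span S := by
  induction hx using Submodule.span_induction with
  | mem x hx => exact hS x hx
  | zero => simp
  | add x y _ _ hx hy => simpa using add_mem hx hy
  | smul a x hx hDx =>
    rw [smul_eq_mul, D.leibniz]
    exact add_mem (Ideal.mul_mem_left _ _ hDx) (Ideal.mul_mem_right _ _ hx)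

theorem derivation_apply_mem_tjurinaIdeal [CommRing R] [Finite σ]
    {D : Derivation R (MvPolynomial σ R) (MvPolynomial σ R)} {g h : MvPolynomial σ R}
    (hD : D g = h * g) {P : MvPolynomial σ R} (hP : P ∈ tjurinaIdeal g) :
    D P ∈ tjurinaIdeal g := by
  cases nonempty_fintype σ
  have hg : g ∈ tjurinaIdeal g := Ideal.subset_span (mem_insert _ _)
  have hpderiv (i : σ) : pderiv i g ∈ tjurinaIdeal g :=
    Ideal.subset_span (mem_insert_of_mem _ (mem_range_self i))
  have hall (E : Derivation R (MvPolynomial σ R) (MvPolynomial σ R)) : E g ∈ tjurinaIdeal g := by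
    rw [derivation_apply_eq_sum_pderiv]
    exact sum_mem fun i _ => Ideal.mul_mem_left _ _ (hpderiv i)
  refine derivation_apply_mem_span ?_ hP
  rintro _ (rfl | ⟨j, rfl⟩)
  · exact hall D
  · -- `⁅D, ∂_j⁆` is again a derivation, so it maps `g` into the ideal generated by the `∂_i g`
    have hcomm : D (pderiv j g) = pderiv j (D g) + ⁅D, pderiv j⁆ g := by
      rw [Derivation.commutator_apply, add_sub_cancel]
    rw [hcomm, hD, Derivation.leibniz]
    exact add_mem (add_mem (Ideal.mul_mem_left _ _ (hpderiv j)) (Ideal.mul_mem_right _ _ hg))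
      (hall _)

end Tjurina

section Chart

variable {n d : ℕ} {f : MvPolynomial (Fin (n + 1)) ℂ} {p : Fin (n + 1) → ℂ}

theorem eval_dehom (f : MvPolynomial (Fin (n + 1)) ℂ) (y : Fin n → ℂ) :
    eval y (dehom n f) = eval (Fin.cons 1 y : Fin (n + 1) → ℂ) f := by
  rw [dehom, eval_aeval]
  congr 2 with i
  cases i using Fin.cases <;> simp

theorem eval_tail_dehom (hp0 : p 0 = 1) (P : MvPolynomial (Fin (n + 1)) ℂ) :
    eval (Fin.tail p) (dehom n P) = eval p P := by
  rw [eval_dehom, ← hp0, Fin.cons_self_tail]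

theorem eval_eq_pow_mul_eval_dehom (hf : f.IsHomogeneous d) {x : Fin (n + 1) → ℂ} (hx : x 0 ≠ 0) :
    eval x f = x 0 ^ d * eval (fun i => x i.succ / x 0) (dehom n f) := by
  have hscale : x 0 • (Fin.cons 1 fun i => x i.succ / x 0 : Fin (n + 1) → ℂ) = x := by
    ext i
    cases i using Fin.cases <;> simp [mul_div_cancel₀, hx]
  rw [eval_dehom, ← eval_smul_of_isHomogeneous hf, hscale]

theorem pderiv_dehom (i : Fin n) (f : MvPolynomial (Fin (n + 1)) ℂ) :
    pderiv i (dehom n f) = dehom n (pderiv i.succ f) := by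
  induction f using MvPolynomial.induction_on with
  | C a => simp [dehom, algebraMap_eq]
  | add P Q hP hQ => simpa [dehom] using congrArg₂ (· + ·) hP hQ
  | mul_X P j hP =>
    have hX : pderiv i (dehom n (X j)) = dehom n (pderiv i.succ (X j)) := by
      cases j using Fin.cases with
      | zero => simp [dehom, pderiv_X_of_ne (Fin.succ_ne_zero i).symm]
      | succ j => by_cases hj : j = i <;> simp [dehom, pderiv_X, hj]
    simp only [dehom, map_mul, Derivation.leibniz, map_add, smul_eq_mul] at hP hX ⊢
    rw [hP, hX]

/-- The vector field induced by `∑ a_i ∂/∂x_i` on the chart `x_0 = 1` with coordinates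
`y_i = x_i / x_0`, as a derivation of the coordinate ring of the chart. -/
def chartDerivation (a : Fin (n + 1) → MvPolynomial (Fin (n + 1)) ℂ) :
    Derivation ℂ (MvPolynomial (Fin n) ℂ) (MvPolynomial (Fin n) ℂ) :=
  mkDerivation ℂ fun i => dehom n (a i.succ) - X i * dehom n (a 0)

theorem derivationField_chartDerivation (a : Fin (n + 1) → MvPolynomial (Fin (n + 1)) ℂ)
    (hp0 : p 0 = 1) (i : Fin n) :
    derivationField (chartDerivation a) (Fin.tail p) i =
      eval p (a i.succ) - p i.succ * eval p (a 0) := by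
  simp [derivationField, chartDerivation, mkDerivation_X, eval_tail_dehom hp0, Fin.tail]

theorem chartDerivation_dehom (hf : f.IsHomogeneous d)
    (a : Fin (n + 1) → MvPolynomial (Fin (n + 1)) ℂ) :
    chartDerivation a (dehom n f) =
      dehom n (∑ i, a i * pderiv i f) - d * dehom n (a 0) * dehom n f := by
  have heuler : dehom n (pderiv 0 f) + ∑ i, X i * dehom n (pderiv i.succ f) = d * dehom n f := by
    simpa [dehom, Fin.sum_univ_succ] using congrArg (dehom n) hf.sum_X_mul_pderiv
  have hsum : dehom n (∑ i, a i * pderiv i f) =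
      dehom n (a 0) * dehom n (pderiv 0 f) +
        ∑ i : Fin n, dehom n (a i.succ) * dehom n (pderiv i.succ f) := by
    simp [dehom, Fin.sum_univ_succ]
  rw [derivation_apply_eq_sum_pderiv, hsum]
  simp only [chartDerivation, mkDerivation_X, pderiv_dehom, sub_mul, Finset.sum_sub_distrib,
    mul_right_comm _ (dehom n (a 0)), ← Finset.sum_mul]
  linear_combination -dehom n (a 0) * heuler

end Chart

section Syzygies

variable {n d : ℕ} {f : MvPolynomial (Fin (n + 1)) ℂ} {p : Fin (n + 1) → ℂ}

theorem syzRank_eq_zero_iff_forall_eval_eq_zero :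
    syzRank n f p = 0 ↔ ∀ a ∈ syzSet n f, ∀ i, eval p (a i) = 0 := by
  rw [syzRank, Submodule.finrank_eq_zero, Submodule.span_eq_bot, evSyz, forall_mem_image]
  exact forall₂_congr fun a _ => funext_iff

theorem mem_syzSet_iff {a : Fin (n + 1) → MvPolynomial (Fin (n + 1)) ℂ} :
    a ∈ syzSet n f ↔ ∑ i, a i * pderiv i f = 0 :=
  Iff.rfl

theorem koszul_mem_syzSet (f : MvPolynomial (Fin (n + 1)) ℂ) (i j : Fin (n + 1)) :
    Pi.single i (pderiv j f) - Pi.single j (pderiv i f) ∈ syzSet n f := by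
  simpa [mem_syzSet_iff, sub_mul, Pi.single_apply, sub_eq_zero] using mul_comm _ _

theorem eval_pderiv_dehom_eq_zero_of_syzRank_eq_zero (hp0 : p 0 = 1) (h : syzRank n f p = 0)
    (i : Fin n) : eval (Fin.tail p) (pderiv i (dehom n f)) = 0 := by
  have hkoszul := syzRank_eq_zero_iff_forall_eval_eq_zero.1 h _ (koszul_mem_syzSet f 0 i.succ) 0
  simpa [pderiv_dehom, eval_tail_dehom hp0] using hkoszul

theorem chartDerivation_dehom_of_mem_syzSet (hf : f.IsHomogeneous d)
    {a : Fin (n + 1) → MvPolynomial (Fin (n + 1)) ℂ} (ha : a ∈ syzSet n f) :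
    chartDerivation a (dehom n f) = -(d * dehom n (a 0)) * dehom n f := by
  rw [chartDerivation_dehom hf, mem_syzSet_iff.1 ha]
  simp [dehom]

theorem cons_mem_syzSet_of_mul_eq_sum (hf : f.IsHomogeneous d) {u : MvPolynomial (Fin (n + 1)) ℂ}
    {c : Fin n → MvPolynomial (Fin (n + 1)) ℂ} (h : ∑ i, c i * pderiv i.succ f = u * f) :
    Fin.cons (u * X 0) (fun i => u * X i.succ - C (d : ℂ) * c i) ∈ syzSet n f := by
  have heuler := hf.sum_X_mul_pderiv
  rw [Fin.sum_univ_succ, nsmul_eq_mul, ← map_natCast C] at heuler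
  simp only [mem_syzSet_iff, Fin.sum_univ_succ, Fin.cons_zero, Fin.cons_succ, sub_mul,
    Finset.sum_sub_distrib, mul_assoc, ← Finset.mul_sum, h]
  linear_combination u * heuler

end Syzygies

section StrongEulerHomogeneity

variable {n d : ℕ} {f : MvPolynomial (Fin (n + 1)) ℂ} {p : Fin (n + 1) → ℂ}

theorem stronglyEulerHomogeneousAt_of_derivation
    {D : Derivation ℂ (MvPolynomial (Fin n) ℂ) (MvPolynomial (Fin n) ℂ)}
    {h : MvPolynomial (Fin n) ℂ} (hD : D (dehom n f) = h * dehom n f)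
    (hh : eval (Fin.tail p) h ≠ 0) (hp : derivationField D (Fin.tail p) = 0) :
    StronglyEulerHomogeneousAt n f p := by
  refine ⟨{y | eval y h ≠ 0}, fun i y => derivationField D y i / eval y h,
    isOpen_ne_fun (continuous_eval h) continuous_const, hh,
    fun i y hy => (analyticAt_eval _ y).div (analyticAt_eval h y) hy,
    fun i => div_eq_zero_iff.2 (.inl (congrFun hp i)), fun y hy => ?_⟩
  have hDy : ∑ i, derivationField D y i * eval y (pderiv i (dehom n f)) =
      eval y h * eval y (dehom n f) := by
    simpa [derivationField, derivation_apply_eq_sum_pderiv D (dehom n f)] using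
      congrArg (eval y) hD
  simp only [div_mul_eq_mul_div, ← Finset.sum_div]
  rw [hDy, mul_div_cancel_left₀ _ hy]

theorem exists_analyticAt_eventually_eq_sum_pderiv (hd : d ≠ 0) (hf : f.IsHomogeneous d)
    (hp0 : p 0 = 1) (h : StronglyEulerHomogeneousAt n f p) :
    ∃ b : Fin n → (Fin (n + 1) → ℂ) → ℂ, (∀ i, AnalyticAt ℂ (b i) p) ∧
      ∀ᶠ x in 𝓝 p, eval x f = ∑ i, b i x * eval x (pderiv i.succ f) := by
  obtain ⟨U, a, hU, hpU, ha, -, hsum⟩ := h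
  let π (x : Fin (n + 1) → ℂ) (i : Fin n) : ℂ := x i.succ / x 0
  have hπp : π p = Fin.tail p := by ext i; simp [π, hp0, Fin.tail]
  have hcoord (i : Fin (n + 1)) : AnalyticAt ℂ (fun x : Fin (n + 1) → ℂ => x i) p :=
    (ContinuousLinearMap.proj (R := ℂ) (φ := fun _ => ℂ) i).analyticAt p
  have hp0' : p 0 ≠ 0 := by simp [hp0]
  have hπ : AnalyticAt ℂ π p := .pi fun i => (hcoord i.succ).div (hcoord 0) hp0'
  refine ⟨fun i x => x 0 * a i (π x),
    fun i => (hcoord 0).mul ((hπp ▸ ha i _ hpU : AnalyticAt ℂ (a i) (π p)).comp hπ), ?_⟩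
  filter_upwards [hπ.continuousAt.eventually_mem (hU.mem_nhds (hπp ▸ hpU)),
    (hcoord 0).continuousAt.eventually_ne hp0'] with x hxU hx0
  have hpderiv (i : Fin n) : x 0 * eval x (pderiv i.succ f) =
      x 0 ^ d * eval (π x) (pderiv i (dehom n f)) := by
    rw [eval_eq_pow_mul_eval_dehom hf.pderiv hx0, ← mul_assoc, mul_pow_sub_one hd, pderiv_dehom]
  rw [eval_eq_pow_mul_eval_dehom hf hx0, hsum _ hxU, Finset.mul_sum]
  refine Finset.sum_congr rfl fun i _ => ?_
  rw [mul_right_comm, hpderiv]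
  ring

theorem exists_mem_syzSet_eval_ne_zero_of_stronglyEulerHomogeneousAt (hd : d ≠ 0)
    (hf : f.IsHomogeneous d) (hp0 : p 0 = 1) (h : StronglyEulerHomogeneousAt n f p) :
    ∃ a ∈ syzSet n f, eval p (a 0) ≠ 0 := by
  obtain ⟨b, hb, hsum⟩ := exists_analyticAt_eventually_eq_sum_pderiv hd hf hp0 h
  obtain ⟨u, hu, hmem⟩ := exists_mul_mem_span_of_eventually_eq_sum hb hsum
  obtain ⟨c, hc⟩ := Ideal.mem_span_range_iff_exists_fun.1 hmem
  exact ⟨_, cons_mem_syzSet_of_mul_eq_sum hf hc, by simpa [hp0] using hu⟩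

theorem eval_eq_zero_of_not_stronglyEulerHomogeneousAt (hd : d ≠ 0) (hf : f.IsHomogeneous d)
    (hp0 : p 0 = 1) (hseh : ¬ StronglyEulerHomogeneousAt n f p)
    {a : Fin (n + 1) → MvPolynomial (Fin (n + 1)) ℂ} (ha : a ∈ syzSet n f)
    (hfield : derivationField (chartDerivation a) (Fin.tail p) = 0) (i : Fin (n + 1)) :
    eval p (a i) = 0 := by
  have ha0 : eval p (a 0) = 0 := by
    by_contra ha0
    refine hseh (stronglyEulerHomogeneousAt_of_derivation
      (chartDerivation_dehom_of_mem_syzSet hf ha) ?_ hfield)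
    simpa [eval_tail_dehom hp0, hd] using ha0
  cases i using Fin.cases with
  | zero => exact ha0
  | succ i => simpa [derivationField_chartDerivation a hp0, ha0] using congrFun hfield i

end StrongEulerHomogeneity

theorem eventually_eq_of_atMostIsolatedSingAt {n : ℕ} {f : MvPolynomial (Fin (n + 1)) ℂ}
    {p : Fin (n + 1) → ℂ} (h : AtMostIsolatedSingAt n f p) :
    ∀ᶠ y in 𝓝 (Fin.tail p), y ∈ zeroLocus ℂ (tjurinaIdeal (dehom n f)) → y = Fin.tail p := by
  obtain ⟨U, hU, hpU, hiso⟩ := h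
  filter_upwards [hU.mem_nhds hpU] with y hyU hy
  exact hiso y hyU (mem_zeroLocus_tjurinaIdeal_iff.1 hy)

theorem syzRank_eq_zero_iff_general (n d : ℕ) (hd : 1 ≤ d)
    (f : MvPolynomial (Fin (n + 1)) ℂ) (hhom : f.IsHomogeneous d)
    (p : Fin (n + 1) → ℂ) (hp0 : p 0 = 1) (hpf : eval p f = 0)
    (hiso : AtMostIsolatedSingAt n f p) :
    syzRank n f p = 0 ↔
      ((∀ i : Fin n, eval (fun j => p j.succ) (pderiv i (dehom n f)) = 0) ∧
        ¬ StronglyEulerHomogeneousAt n f p) := by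
  have hd0 : d ≠ 0 := Nat.one_le_iff_ne_zero.1 hd
  refine ⟨fun h => ⟨eval_pderiv_dehom_eq_zero_of_syzRank_eq_zero hp0 h, fun hseh => ?_⟩,
    fun ⟨hsing, hseh⟩ => syzRank_eq_zero_iff_forall_eval_eq_zero.2 fun a ha => ?_⟩
  · obtain ⟨a, ha, ha0⟩ :=
      exists_mem_syzSet_eval_ne_zero_of_stronglyEulerHomogeneousAt hd0 hhom hp0 hseh
    exact ha0 (syzRank_eq_zero_iff_forall_eval_eq_zero.1 h a ha 0)
  · have hp : Fin.tail p ∈ zeroLocus ℂ (tjurinaIdeal (dehom n f)) :=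
      mem_zeroLocus_tjurinaIdeal_iff.2 ⟨by rw [eval_tail_dehom hp0, hpf], hsing⟩
    have hfield : derivationField (chartDerivation a) (Fin.tail p) = 0 :=
      derivationField_eq_zero_of_isolated
        (fun _ => derivation_apply_mem_tjurinaIdeal (chartDerivation_dehom_of_mem_syzSet hhom ha))
        hp (eventually_eq_of_atMostIsolatedSingAt hiso)
    exact eval_eq_zero_of_not_stronglyEulerHomogeneousAt hd0 hhom hp0 hseh ha hfield

/-- If `p` is an at most isolated singular point of `D = V(f)`, then `rk M'_f(p) = 0` iff `p`
is a singular point of `D` and `D` is not strongly Euler homogeneous at `p`. -/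
theorem syzRank_eq_zero_iff (n d : ℕ) (hn : 1 ≤ n) (hd : 1 ≤ d)
    (f : MvPolynomial (Fin (n + 1)) ℂ) (hsf : Squarefree f) (hhom : f.IsHomogeneous d)
    (p : Fin (n + 1) → ℂ) (hp0 : p 0 = 1) (hpf : eval p f = 0)
    (hiso : AtMostIsolatedSingAt n f p) :
    syzRank n f p = 0 ↔
      ((∀ i : Fin n, eval (fun j => p j.succ) (pderiv i (dehom n f)) = 0) ∧
        ¬ StronglyEulerHomogeneousAt n f p) :=
  syzRank_eq_zero_iff_general n d hd f hhom p hp0 hpf hiso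

end
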